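/- For every g ∈ S and every m ∈ L (so that g·m ∈ S), one has H(g·m) = m⁻¹·H(g)·m. -/

import Mathlib

/-- `g'` is reachable from `g`. -/
def Reachable {G : Type*} [Group G] (Γ Nm Np : Subgroup G) (S : Set G) (g g' : G) : Prop :=
  ∃ hs : List G, (∀ h ∈ hs, h ∈ (↑Nm ∪ ↑Np : Set G)) ∧
    (∀ r ≤ hs.length, g * (hs.take r).prod ∈ S) ∧
    ∃ γ ∈ Γ, γ * (g * hs.prod) = g'

/-! Since `g * m * (m⁻¹ * h₁ * m) ⋯ (m⁻¹ * hᵣ * m) = g * h₁ ⋯ hᵣ * m`, conjugating every step by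
`m⁻¹` turns a path from `g` into a path from `g * m` whose points are the original ones translated
on the right by `m`. Right translation by `m` therefore preserves reachability, and
`g * m * l = g * (m * l * m⁻¹) * m` converts this into conjugation of transitivity sets. -/

section

open Subgroup

variable {G : Type*} [Group G] {Γ Nm Np L : Subgroup G} {S : Set G} {g g' l m : G}

theorem le_normalizer_union {s t : Set G} (hs : L ≤ normalizer s) (ht : L ≤ normalizer t) :
    L ≤ normalizer (s ∪ t) :=
  fun _ hl n => or_congr (hs hl n) (ht hl n)

theorem mul_mem_iff_of_forall_mul_mem (hSL : ∀ s ∈ S, ∀ l ∈ L, s * l ∈ S) (hm : m ∈ L) (s : G) :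
    s * m ∈ S ↔ s ∈ S :=
  ⟨fun hs => by simpa only [mul_inv_cancel_right] using hSL _ hs m⁻¹ (L.inv_mem hm),
    fun hs => hSL s hs m hm⟩

theorem mul_prod_map_conj_inv (m : G) (hs : List G) :
    m * (hs.map (MulAut.conj m⁻¹)).prod = hs.prod * m := by
  rw [← map_list_prod, MulAut.conj_apply, inv_inv, mul_assoc, mul_inv_cancel_left]

theorem Reachable.mul_right (hN : m ∈ normalizer (Nm ∪ Np : Set G)) (hS : ∀ s ∈ S, s * m ∈ S)
    (h : Reachable Γ Nm Np S g g') : Reachable Γ Nm Np S (g * m) (g' * m) := by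
  obtain ⟨hs, hs_mem, path_mem, γ, hγ, rfl⟩ := h
  have translate_prod (hs : List G) :
      g * m * (hs.map (MulAut.conj m⁻¹)).prod = g * hs.prod * m := by
    rw [mul_assoc, mul_prod_map_conj_inv, mul_assoc]
  refine ⟨hs.map (MulAut.conj m⁻¹), ?_, fun r hr => ?_, γ, hγ, ?_⟩
  · exact List.forall_mem_map.2 fun h hh =>
      (mem_set_normalizer_iff.1 (inv_mem hN) h).1 (hs_mem h hh)
  · rw [← List.map_take, translate_prod]
    exact hS _ (path_mem r (by rwa [List.length_map] at hr))
  · rw [translate_prod, mul_assoc γ]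

theorem reachable_mul_right_iff (hN : m ∈ normalizer (Nm ∪ Np : Set G))
    (hS : ∀ s, s * m ∈ S ↔ s ∈ S) :
    Reachable Γ Nm Np S (g * m) (g' * m) ↔ Reachable Γ Nm Np S g g' := by
  have hS_inv (s : G) (hs : s ∈ S) : s * m⁻¹ ∈ S := by
    rwa [← hS, inv_mul_cancel_right]
  refine ⟨fun h => ?_, Reachable.mul_right hN fun s => (hS s).2⟩
  simpa only [mul_inv_cancel_right] using h.mul_right (inv_mem hN) hS_inv

/-- The transitivity set `H(g)`: the elements `l` of `L` such that `g * l` is reachable from `g`.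
The definition does not require `g ∈ S`; as the empty path already forces the base point into `S`,
`H(g)` is empty for `g ∉ S`. -/
def transitivitySet (Γ Nm Np L : Subgroup G) (S : Set G) (g : G) : Set G :=
  {l | l ∈ L ∧ Reachable Γ Nm Np S g (g * l)}

theorem mem_transitivitySet_mul_right_iff (hL : m ∈ normalizer (L : Set G))
    (hN : m ∈ normalizer (Nm ∪ Np : Set G)) (hS : ∀ s, s * m ∈ S ↔ s ∈ S) :
    l ∈ transitivitySet Γ Nm Np L S (g * m) ↔ m * l * m⁻¹ ∈ transitivitySet Γ Nm Np L S g := by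
  have translate : g * m * l = g * (m * l * m⁻¹) * m := by group
  refine and_congr (mem_normalizer_iff.1 hL l) ?_
  rw [translate, reachable_mul_right_iff hN hS]

/-- Normalizing only the union lets `m` interchange `Nm` and `Np`, as a Weyl group element may. -/
theorem transitivity_set_conjugation_general (hL : m ∈ normalizer (L : Set G))
    (hN : m ∈ normalizer (Nm ∪ Np : Set G)) (hS : ∀ s, s * m ∈ S ↔ s ∈ S) (g : G) :
    transitivitySet Γ Nm Np L S (g * m) =
      (fun l => m⁻¹ * l * m) '' transitivitySet Γ Nm Np L S g := by
  have conj_image : (fun l => m⁻¹ * l * m) '' transitivitySet Γ Nm Np L S g =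
      (fun l => m * l * m⁻¹) ⁻¹' transitivitySet Γ Nm Np L S g :=
    congrFun (Set.image_eq_preimage_of_inverse (fun l => by group) (fun l => by group)) _
  rw [conj_image]
  exact Set.ext fun l => mem_transitivitySet_mul_right_iff hL hN hS

end

/-- For every `g ∈ S` and every `m ∈ L` (so that `g·m ∈ S`), one has
`H(g·m) = m⁻¹·H(g)·m`. -/
theorem transitivity_set_conjugation {G : Type*} [Group G]
    (Γ Nm Np L : Subgroup G) (S : Set G)
    (hnormm : ∀ l ∈ L, ∀ n ∈ Nm, l * n * l⁻¹ ∈ Nm)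
    (hnormp : ∀ l ∈ L, ∀ n ∈ Np, l * n * l⁻¹ ∈ Np)
    (hSΓ : ∀ s ∈ S, ∀ γ ∈ Γ, γ * s ∈ S)
    (hSL : ∀ s ∈ S, ∀ l ∈ L, s * l ∈ S)
    (g : G) (hg : g ∈ S) (m : G) (hm : m ∈ L) :
    {l : G | l ∈ L ∧ Reachable Γ Nm Np S (g * m) (g * m * l)} =
      (fun l => m⁻¹ * l * m) '' {l : G | l ∈ L ∧ Reachable Γ Nm Np S g (g * l)} := by
  have hN := le_normalizer_union (Subgroup.le_normalizer_iff.2 hnormm)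
    (Subgroup.le_normalizer_iff.2 hnormp)
  exact transitivity_set_conjugation_general (L.le_normalizer hm) (hN hm)
    (mul_mem_iff_of_forall_mul_mem hSL hm) g
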